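/- Let R ⊆ ℝⁿ be a compact convex set, let g be twice continuously differentiable on an open set containing R, let ε > 0, and let f be a layered feedforward network on ℝⁿ of depth d with widths ω₁, …, ω_d whose activation σ is piecewise linear with t pieces, such that f is an ε-approximation of g on R. Then t^{|H|} ≥ sup_{(x,y) ∈ R×R} (‖x − y‖₂ / (4√ε)) · Ψ(g, x, y), where |H| = ω₁ + … + ω_d is the number of hidden units of f. -/

import Mathlib

noncomputable def hess {n : ℕ} (g : EuclideanSpace ℝ (Fin n) → ℝ)
    (z : EuclideanSpace ℝ (Fin n)) : Matrix (Fin n) (Fin n) ℝ :=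
  fun i j => iteratedFDeriv ℝ 2 g z ![EuclideanSpace.single i 1, EuclideanSpace.single j 1]

noncomputable def lamMax {n : ℕ} (A : Matrix (Fin n) (Fin n) ℝ) : ℝ := sSup (spectrum ℝ A)

noncomputable def lamMin {n : ℕ} (A : Matrix (Fin n) (Fin n) ℝ) : ℝ := sInf (spectrum ℝ A)

noncomputable def Psi {n : ℕ} (g : EuclideanSpace ℝ (Fin n) → ℝ)
    (x y : EuclideanSpace ℝ (Fin n)) : ℝ :=
  Real.sqrt (sInf ((fun α : ℝ =>
      max 0 (Real.sign (lamMax (hess g ((1 - α) • x + α • y)) *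
          lamMin (hess g ((1 - α) • x + α • y))) *
        min |lamMax (hess g ((1 - α) • x + α • y))|
            |lamMin (hess g ((1 - α) • x + α • y))|)) '' Set.Icc (0 : ℝ) 1))

/-- `σ : ℝ → ℝ` is piecewise linear with `t` pieces: `ℝ` is the union of `t` pairwise
disjoint nonempty intervals on each of which `σ` coincides with an affine function. -/
def PiecewiseLinear (σ : ℝ → ℝ) (t : ℕ) : Prop :=
  ∃ I : Fin t → Set ℝ,
    (∀ i, (I i).Nonempty) ∧ (∀ i, Convex ℝ (I i)) ∧
    (Pairwise fun i j => Disjoint (I i) (I j)) ∧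
    (⋃ i, I i) = Set.univ ∧
    ∀ i, ∃ a b : ℝ, ∀ z ∈ I i, σ z = a * z + b

/-- A layered feedforward network on `ℝⁿ`, allowing connections from all earlier layers
and from the input.  Layers are indexed by `0, …, depth - 1`. -/
structure LayeredNet (n : ℕ) where
  depth : ℕ
  width : ℕ → ℕ
  Win : (i : ℕ) → Fin (width i) → Fin n → ℝ
  W : (i j : ℕ) → Fin (width i) → Fin (width j) → ℝ
  b : (i : ℕ) → Fin (width i) → ℝ
  cin : Fin n → ℝ
  c : (i : ℕ) → Fin (width i) → ℝ
  c0 : ℝ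

/-- The output of the hidden units in layer `i`. -/
noncomputable def LayeredNet.layer {n : ℕ} (N : LayeredNet n) (σ : ℝ → ℝ)
    (x : EuclideanSpace ℝ (Fin n)) : (i : ℕ) → Fin (N.width i) → ℝ
  | i => fun k => σ ((∑ m, N.Win i k m * x m) +
      (∑ j : Fin i, ∑ m, N.W i j k m * N.layer σ x j m) + N.b i k)
  termination_by i => i
  decreasing_by exact j.isLt

/-- The (real-valued) output of the network with activation `σ`. -/
noncomputable def LayeredNet.eval {n : ℕ} (N : LayeredNet n) (σ : ℝ → ℝ)
    (x : EuclideanSpace ℝ (Fin n)) : ℝ :=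
  (∑ m, N.cin m * x m) + (∑ i ∈ Finset.range N.depth, ∑ m, N.c i m * N.layer σ x i m) + N.c0

/-- The number of hidden units `|H| = ω₁ + ⋯ + ω_d`. -/
def LayeredNet.numHidden {n : ℕ} (N : LayeredNet n) : ℕ :=
  ∑ i ∈ Finset.range N.depth, N.width i

/-!
On an activation region, the set of inputs for which every hidden unit sees its preactivation in a
prescribed piece of `σ`, the network is affine, and there are `t ^ |H|` such regions. If
`m = Ψ(g, x, y) ^ 2` is positive, then along the segment `[x, y]` the Hessian of `g` is definite
with all eigenvalues at least `m` in absolute value; by continuity its sign does not change, so `g`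
is `m`-strongly convex or `m`-strongly concave there. Comparing `g` with the network at two points
`a`, `b` of one region and at their midpoint bounds the gap `m ‖a - b‖ ^ 2 / 8` of strong convexity
by `2 ε`, so each region meets the segment in a set of diameter at most `4 √(ε / m)`. These sets
cover the segment, hence `‖x - y‖ ≤ t ^ |H| * 4 √(ε / m)`.
-/

section AffineOn

variable {E F G : Type*} [AddCommGroup E] [Module ℝ E] [AddCommGroup F] [Module ℝ F]
  [AddCommGroup G] [Module ℝ G]

/-- `f` commutes with convex combinations of points of `s`. The set `s` need not be convex: the
value of `f` at a convex combination is prescribed even when that combination leaves `s`, so that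
networks can be treated on activation regions without first proving the regions convex. -/
def AffineOn (s : Set E) (f : E → F) : Prop :=
  ∀ ⦃x⦄, x ∈ s → ∀ ⦃y⦄, y ∈ s → ∀ ⦃a b : ℝ⦄, 0 ≤ a → 0 ≤ b → a + b = 1 →
    f (a • x + b • y) = a • f x + b • f y

namespace AffineOn

variable {s : Set E}

lemma const (c : F) : AffineOn s fun _ ↦ c := fun _ _ _ _ _ _ _ _ hab ↦
  (Convex.combo_self hab c).symm

lemma of_linearMap (f : E →ₗ[ℝ] F) : AffineOn s f := fun _ _ _ _ _ _ _ _ _ ↦ by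
  simp only [map_add, map_smul]

lemma add {f g : E → F} (hf : AffineOn s f) (hg : AffineOn s g) :
    AffineOn s fun x ↦ f x + g x := fun x hx y hy a b ha hb hab ↦ by
  simp only [hf hx hy ha hb hab, hg hx hy ha hb hab]
  module

lemma sum {ι : Type*} {t : Finset ι} {f : ι → E → F} (hf : ∀ i ∈ t, AffineOn s (f i)) :
    AffineOn s fun x ↦ ∑ i ∈ t, f i x := fun x hx y hy a b ha hb hab ↦ by
  simp only [Finset.smul_sum, ← Finset.sum_add_distrib]
  exact Finset.sum_congr rfl fun i hi ↦ hf i hi hx hy ha hb hab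

lemma const_mul {f : E → ℝ} (c : ℝ) (hf : AffineOn s f) : AffineOn s fun x ↦ c * f x :=
  fun x hx y hy a b ha hb hab ↦ by
    simp only [hf hx hy ha hb hab, smul_eq_mul]
    ring

lemma comp {t : Set F} {g : F → G} {f : E → F} (hg : AffineOn t g) (hf : AffineOn s f)
    (hst : Set.MapsTo f s t) : AffineOn s fun x ↦ g (f x) := fun x hx y hy a b ha hb hab ↦ by
  simp only [hf hx hy ha hb hab, hg (hst hx) (hst hy) ha hb hab]

lemma neg {f : E → F} (hf : AffineOn s f) : AffineOn s (-f) := fun x hx y hy a b ha hb hab ↦ by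
  simp only [Pi.neg_apply, hf hx hy ha hb hab]
  module

lemma sum_mul_coord {ι : Type*} [Fintype ι] (c : ι → ℝ) (s : Set (EuclideanSpace ℝ ι)) :
    AffineOn s fun x ↦ ∑ i, c i * x i :=
  sum fun i _ ↦ const_mul _ <| of_linearMap (EuclideanSpace.proj i).toLinearMap

end AffineOn

end AffineOn

lemma PiecewiseLinear.exists_affineOn {σ : ℝ → ℝ} {t : ℕ} (hσ : PiecewiseLinear σ t) :
    ∃ I : Fin t → Set ℝ, ⋃ i, I i = Set.univ ∧ ∀ i, AffineOn (I i) σ := by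
  obtain ⟨I, -, hconv, -, hcover, haff⟩ := hσ
  refine ⟨I, hcover, fun i x hx y hy a b ha hb hab ↦ ?_⟩
  obtain ⟨p, q, hpq⟩ := haff i
  rw [hpq x hx, hpq y hy, hpq _ (hconv i hx hy ha hb hab)]
  simp only [smul_eq_mul]
  linear_combination (-q) * hab

namespace LayeredNet

variable {n : ℕ} (N : LayeredNet n) (σ : ℝ → ℝ)

/-- The index set of the hidden units: a layer together with a position in that layer. -/
abbrev HiddenUnit : Type := (i : Fin N.depth) × Fin (N.width i)

lemma card_hiddenUnit : Fintype.card N.HiddenUnit = N.numHidden := by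
  simp only [Fintype.card_sigma, Fintype.card_fin, numHidden,
    Fin.sum_univ_eq_sum_range (fun i ↦ N.width i)]

/-- The preactivation of unit `k` of layer `i`: the number to which the unit applies `σ`. -/
noncomputable def preact (i : ℕ) (k : Fin (N.width i)) (x : EuclideanSpace ℝ (Fin n)) : ℝ :=
  (∑ m, N.Win i k m * x m) + (∑ j : Fin i, ∑ m, N.W i j k m * N.layer σ x j m) + N.b i k

lemma layer_eq_preact (x : EuclideanSpace ℝ (Fin n)) (i : ℕ) (k : Fin (N.width i)) :
    N.layer σ x i k = σ (N.preact σ i k x) := by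
  rw [layer, preact]

/-- The activation region of the pattern `s`: the set of inputs for which every hidden unit `u` has
its preactivation in the piece `I (s u)`. -/
def activationRegion {ι : Type*} (I : ι → Set ℝ) (s : N.HiddenUnit → ι) :
    Set (EuclideanSpace ℝ (Fin n)) :=
  {x | ∀ u : N.HiddenUnit, N.preact σ u.1 u.2 x ∈ I (s u)}

variable {σ}

lemma iUnion_activationRegion {ι : Type*} {I : ι → Set ℝ} (hI : ⋃ i, I i = Set.univ) :
    ⋃ s, N.activationRegion σ I s = Set.univ := by
  refine Set.eq_univ_of_forall fun x ↦ Set.mem_iUnion.2 ?_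
  exact Classical.skolem.1 fun u : N.HiddenUnit ↦
    Set.mem_iUnion.1 (hI ▸ Set.mem_univ (N.preact σ u.1 u.2 x))

variable {N}

lemma affineOn_preact {S : Set (EuclideanSpace ℝ (Fin n))} {i : ℕ}
    (h : ∀ j < i, ∀ m, AffineOn S fun x ↦ N.layer σ x j m) (k : Fin (N.width i)) :
    AffineOn S (N.preact σ i k) :=
  ((AffineOn.sum_mul_coord _ S).add <|
    .sum fun (j : Fin i) _ ↦ .sum fun m _ ↦ .const_mul _ <| h j j.isLt m).add (.const _)

variable {ι : Type*} {I : ι → Set ℝ}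

lemma affineOn_layer (hI : ∀ i, AffineOn (I i) σ) (s : N.HiddenUnit → ι) {i : ℕ}
    (hi : i < N.depth) (k : Fin (N.width i)) :
    AffineOn (N.activationRegion σ I s) fun x ↦ N.layer σ x i k := by
  induction i using Nat.strong_induction_on with
  | _ i ih =>
    simp only [layer_eq_preact]
    exact (hI (s ⟨⟨i, hi⟩, k⟩)).comp (affineOn_preact (fun j hj ↦ ih j hj (hj.trans hi)) k)
      fun _ hx ↦ hx ⟨⟨i, hi⟩, k⟩

lemma affineOn_eval (hI : ∀ i, AffineOn (I i) σ) (s : N.HiddenUnit → ι) :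
    AffineOn (N.activationRegion σ I s) (N.eval σ) :=
  ((AffineOn.sum_mul_coord _ _).add <| .sum fun _ hi ↦ .sum fun m _ ↦
    .const_mul _ <| affineOn_layer hI s (Finset.mem_range.1 hi) m).add (.const _)

end LayeredNet

section Cover

open MeasureTheory

-- The function `dist x` is 1-Lipschitz and maps `S` onto a set containing `[0, dist x y]`.
lemma edist_le_sum_ediam_of_isPreconnected {X ι : Type*} [PseudoMetricSpace X] [Fintype ι]
    {S : Set X} (hS : IsPreconnected S) {C : ι → Set X} (hC : S ⊆ ⋃ i, C i) {x y : X}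
    (hx : x ∈ S) (hy : y ∈ S) : edist x y ≤ ∑ i, Metric.ediam (C i) := by
  have hcover : Set.Icc 0 (dist x y) ⊆ ⋃ i, dist x '' C i := by
    rw [← Set.image_iUnion, ← dist_self x]
    exact (hS.intermediate_value hx hy (by fun_prop)).trans (Set.image_mono hC)
  calc edist x y = volume (Set.Icc 0 (dist x y)) := by
        rw [Real.volume_Icc, sub_zero, edist_dist]
    _ ≤ ∑ i, volume (dist x '' C i) :=
        (measure_mono hcover).trans (measure_iUnion_fintype_le _ _)
    _ ≤ ∑ i, Metric.ediam (C i) := Finset.sum_le_sum fun i _ ↦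
        (Real.volume_le_diam _).trans <| by
          simpa using (LipschitzWith.dist_right x).ediam_image_le (C i)

lemma dist_le_card_mul_of_isPreconnected {X ι : Type*} [PseudoMetricSpace X] [Fintype ι]
    {S : Set X} (hS : IsPreconnected S) {C : ι → Set X} (hC : S ⊆ ⋃ i, C i) {δ : ℝ} (hδ : 0 ≤ δ)
    (hdist : ∀ i, ∀ a ∈ C i, ∀ b ∈ C i, dist a b ≤ δ) {x y : X} (hx : x ∈ S) (hy : y ∈ S) :
    dist x y ≤ Fintype.card ι * δ := by
  have hdiam (i : ι) : Metric.ediam (C i) ≤ ENNReal.ofReal δ :=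
    Metric.ediam_le fun a ha b hb ↦ by
      rw [edist_dist]
      exact ENNReal.ofReal_le_ofReal (hdist i a ha b hb)
  have h := (edist_le_sum_ediam_of_isPreconnected hS hC hx hy).trans
    (Finset.sum_le_sum fun i _ ↦ hdiam i)
  rwa [Finset.sum_const, Finset.card_univ, nsmul_eq_mul, ← ENNReal.ofReal_natCast,
    ← ENNReal.ofReal_mul (by positivity), edist_dist,
    ENNReal.ofReal_le_ofReal_iff (by positivity)] at h

end Cover

lemma forall_le_or_forall_le_neg_of_isPreconnected {X : Type*} [TopologicalSpace X] {S : Set X}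
    (hS : IsPreconnected S) {f : X → ℝ} (hf : ContinuousOn f S) {c : ℝ} (hc : 0 < c)
    (h : ∀ z ∈ S, c ≤ |f z|) : (∀ z ∈ S, c ≤ f z) ∨ ∀ z ∈ S, f z ≤ -c := by
  by_contra! ⟨⟨z, hz, hzc⟩, ⟨w, hw, hwc⟩⟩
  have hz₀ : f z ≤ 0 := by
    rcases le_abs.1 (h z hz) with h | h <;> linarith
  have hw₀ : 0 ≤ f w := by
    rcases le_abs.1 (h w hw) with h | h <;> linarith
  obtain ⟨q, hq, hq₀⟩ := hS.intermediate_value hz hw hf ⟨hz₀, hw₀⟩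
  exact hc.not_ge (by simpa [hq₀] using h q hq)

section StrongConvexity

lemma strongConvexOn_of_hasDerivWithinAt2 {D : Set ℝ} (hD : Convex ℝ D) {f f' f'' : ℝ → ℝ}
    {m : ℝ} (hf : ContinuousOn f D)
    (hf' : ∀ x ∈ interior D, HasDerivWithinAt f (f' x) (interior D) x)
    (hf'' : ∀ x ∈ interior D, HasDerivWithinAt f' (f'' x) (interior D) x)
    (hm : ∀ x ∈ interior D, m ≤ f'' x) : StrongConvexOn D m f := by
  simp only [strongConvexOn_iff_convex, Real.norm_eq_abs, sq_abs]
  refine convexOn_of_hasDerivWithinAt2_nonneg hD (f' := fun x ↦ f' x - m * x)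
    (f'' := fun x ↦ f'' x - m) (hf.sub (by fun_prop)) (fun x hx ↦ ?_) (fun x hx ↦ ?_)
    fun x hx ↦ sub_nonneg.2 (hm x hx)
  · refine (hf' x hx).sub
      (((hasDerivAt_pow 2 x).hasDerivWithinAt.const_mul (m / 2)).congr_deriv ?_)
    push_cast
    ring
  · refine (hf'' x hx).sub ?_
    simpa using (hasDerivWithinAt_id x (interior D)).const_mul m

variable {E : Type*} [NormedAddCommGroup E] [NormedSpace ℝ E] {g : E → ℝ} {m : ℝ}

lemma strongConvexOn_of_le_fderiv_fderiv {s : Set E} (hs : Convex ℝ s)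
    (hg : ∀ z ∈ s, DifferentiableAt ℝ g z) (hg' : ∀ z ∈ s, DifferentiableAt ℝ (fderiv ℝ g) z)
    (hm : ∀ z ∈ s, ∀ u ∈ s, ∀ v ∈ s,
      m * ‖v - u‖ ^ 2 ≤ fderiv ℝ (fderiv ℝ g) z (v - u) (v - u)) :
    StrongConvexOn s m g := by
  refine ⟨hs, fun u hu v hv a b ha hb hab ↦ ?_⟩
  let ℓ : ℝ → E := AffineMap.lineMap u v
  have hℓs {τ : ℝ} (hτ : τ ∈ Set.Icc (0 : ℝ) 1) : ℓ τ ∈ s := hs.lineMap_mem hu hv hτ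
  have hℓ (τ : ℝ) : HasDerivAt ℓ (v - u) τ := AffineMap.hasDerivAt_lineMap
  have hderiv {τ : ℝ} (hτ : τ ∈ Set.Icc (0 : ℝ) 1) :
      HasDerivAt (g ∘ ℓ) (fderiv ℝ g (ℓ τ) (v - u)) τ :=
    (hg _ (hℓs hτ)).hasFDerivAt.comp_hasDerivAt τ (hℓ τ)
  have hderiv2 {τ : ℝ} (hτ : τ ∈ Set.Icc (0 : ℝ) 1) :
      HasDerivAt (fun τ ↦ fderiv ℝ g (ℓ τ) (v - u))
        (fderiv ℝ (fderiv ℝ g) (ℓ τ) (v - u) (v - u)) τ := by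
    simpa using ((hg' _ (hℓs hτ)).hasFDerivAt.comp_hasDerivAt τ (hℓ τ)).clm_apply
      (hasDerivAt_const τ (v - u))
  have hconv : StrongConvexOn (Set.Icc (0 : ℝ) 1) (m * ‖v - u‖ ^ 2) (g ∘ ℓ) :=
    strongConvexOn_of_hasDerivWithinAt2 (convex_Icc 0 1)
      (fun τ hτ ↦ (hderiv hτ).continuousAt.continuousWithinAt)
      (fun τ hτ ↦ (hderiv (interior_subset hτ)).hasDerivWithinAt)
      (fun τ hτ ↦ (hderiv2 (interior_subset hτ)).hasDerivWithinAt)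
      fun τ hτ ↦ hm _ (hℓs (interior_subset hτ)) u hu v hv
  have h := hconv.2 (Set.left_mem_Icc.2 zero_le_one) (Set.right_mem_Icc.2 zero_le_one) ha hb hab
  have hcombo : ℓ (a • 0 + b • 1) = a • u + b • v := by
    rw [smul_zero, zero_add, smul_eq_mul, mul_one, ← sub_eq_of_eq_add hab.symm]
    exact AffineMap.lineMap_apply_module u v b
  simp only [Function.comp_apply, hcombo, zero_sub, norm_neg, norm_one, one_pow, mul_one, ℓ,
    AffineMap.lineMap_apply_zero, AffineMap.lineMap_apply_one, norm_sub_rev v u,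
    mul_div_right_comm] at h
  exact h

variable {x y : E}

lemma strongConvexOn_segment (hg : ∀ z ∈ segment ℝ x y, DifferentiableAt ℝ g z)
    (hg' : ∀ z ∈ segment ℝ x y, DifferentiableAt ℝ (fderiv ℝ g) z)
    (hm : ∀ z ∈ segment ℝ x y,
      m * ‖y - x‖ ^ 2 ≤ fderiv ℝ (fderiv ℝ g) z (y - x) (y - x)) :
    StrongConvexOn (segment ℝ x y) m g := by
  refine strongConvexOn_of_le_fderiv_fderiv (convex_segment x y) hg hg' fun z hz u hu v hv ↦ ?_
  rw [segment_eq_image'] at hu hv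
  obtain ⟨a, -, rfl⟩ := hu
  obtain ⟨b, -, rfl⟩ := hv
  have hdir : x + b • (y - x) - (x + a • (y - x)) = (b - a) • (y - x) := by module
  simp only [hdir, norm_smul, Real.norm_eq_abs, mul_pow, sq_abs, map_smul, smul_eq_mul,
    smul_apply]
  calc m * ((b - a) ^ 2 * ‖y - x‖ ^ 2) = (b - a) ^ 2 * (m * ‖y - x‖ ^ 2) := by ring
    _ ≤ (b - a) ^ 2 * fderiv ℝ (fderiv ℝ g) z (y - x) (y - x) := by
        gcongr
        exact hm z hz
    _ = (b - a) * ((b - a) * fderiv ℝ (fderiv ℝ g) z (y - x) (y - x)) := by ring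

lemma strongConvexOn_or_strongConcaveOn_segment (hg : ∀ z ∈ segment ℝ x y, ContDiffAt ℝ 2 g z)
    (hxy : x ≠ y) (hm₀ : 0 < m)
    (hm : ∀ z ∈ segment ℝ x y,
      m * ‖y - x‖ ^ 2 ≤ |fderiv ℝ (fderiv ℝ g) z (y - x) (y - x)|) :
    StrongConvexOn (segment ℝ x y) m g ∨ StrongConcaveOn (segment ℝ x y) m g := by
  have hg₁ (z) (hz : z ∈ segment ℝ x y) : ContDiffAt ℝ 1 (fderiv ℝ g) z :=
    (hg z hz).fderiv_right (by norm_num)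
  have hdiff (z) (hz : z ∈ segment ℝ x y) : DifferentiableAt ℝ g z :=
    (hg z hz).differentiableAt two_ne_zero
  have hdiff' (z) (hz : z ∈ segment ℝ x y) : DifferentiableAt ℝ (fderiv ℝ g) z :=
    (hg₁ z hz).differentiableAt one_ne_zero
  have hcont : ContinuousOn (fun z ↦ fderiv ℝ (fderiv ℝ g) z (y - x) (y - x)) (segment ℝ x y) :=
    fun z hz ↦ ((((hg₁ z hz).fderiv_right (m := 0) (by norm_num)).continuousAt.clm_apply
      continuousAt_const).clm_apply continuousAt_const).continuousWithinAt
  have hpos : 0 < m * ‖y - x‖ ^ 2 := mul_pos hm₀ (pow_pos (norm_sub_pos_iff.2 hxy.symm) 2)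
  refine (forall_le_or_forall_le_neg_of_isPreconnected (convex_segment x y).isPreconnected
    hcont hpos hm).imp (strongConvexOn_segment hdiff hdiff') fun hneg ↦ ?_
  have hgneg : StrongConvexOn (segment ℝ x y) m (-g) := by
    have hfderiv : fderiv ℝ (-g) = -fderiv ℝ g := funext fun z ↦ fderiv_neg
    refine strongConvexOn_segment (fun z hz ↦ (hdiff z hz).neg) (fun z hz ↦ ?_) fun z hz ↦ ?_
    · rw [hfderiv]
      exact (hdiff' z hz).neg
    · rw [hfderiv, fderiv_neg, neg_apply, neg_apply]
      exact le_neg.1 (hneg z hz)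
  simpa only [neg_neg] using! hgneg.neg

end StrongConvexity

section Approximation

variable {E : Type*} [NormedAddCommGroup E] [NormedSpace ℝ E] {s : Set E} {m ε : ℝ} {f g : E → ℝ}

lemma mul_sq_dist_le_of_strongConvexOn_of_affineOn (hg : StrongConvexOn s m g)
    (hfg : ∀ z ∈ s, |f z - g z| ≤ ε) {C : Set E} (hf : AffineOn C f) {a b : E} (ha : a ∈ s ∩ C)
    (hb : b ∈ s ∩ C) : m * dist a b ^ 2 ≤ 16 * ε := by
  have hhalf : (0 : ℝ) ≤ 1 / 2 := by norm_num
  have hmid : (1 / 2 : ℝ) • a + (1 / 2 : ℝ) • b ∈ s :=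
    hg.1 ha.1 hb.1 hhalf hhalf (add_halves 1)
  have hconv := hg.2 ha.1 hb.1 hhalf hhalf (add_halves 1)
  have haff := hf ha.2 hb.2 hhalf hhalf (add_halves 1)
  simp only [smul_eq_mul] at hconv haff
  rw [dist_eq_norm]
  linarith [abs_le.1 (hfg a ha.1), abs_le.1 (hfg b hb.1), abs_le.1 (hfg _ hmid)]

lemma mul_sq_dist_le_of_strongConcaveOn_of_affineOn (hg : StrongConcaveOn s m g)
    (hfg : ∀ z ∈ s, |f z - g z| ≤ ε) {C : Set E} (hf : AffineOn C f) {a b : E} (ha : a ∈ s ∩ C)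
    (hb : b ∈ s ∩ C) : m * dist a b ^ 2 ≤ 16 * ε := by
  refine mul_sq_dist_le_of_strongConvexOn_of_affineOn hg.neg (fun z hz ↦ ?_) hf.neg ha hb
  rw [Pi.neg_apply, Pi.neg_apply, neg_sub_neg, abs_sub_comm]
  exact hfg z hz

lemma dist_le_card_mul_of_affineOn {ι : Type*} [Fintype ι] {C : ι → Set E} (hsC : s ⊆ ⋃ i, C i)
    (hf : ∀ i, AffineOn (C i) f) (hg : StrongConvexOn s m g ∨ StrongConcaveOn s m g) (hm : 0 < m)
    (hfg : ∀ z ∈ s, |f z - g z| ≤ ε) {x y : E} (hx : x ∈ s) (hy : y ∈ s) :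
    dist x y ≤ Fintype.card ι * (4 * √(ε / m)) := by
  have hconv : Convex ℝ s := hg.elim (·.1) (·.1)
  have hcover : s ⊆ ⋃ i, s ∩ C i := by
    rw [← Set.inter_iUnion]
    exact Set.subset_inter subset_rfl hsC
  refine dist_le_card_mul_of_isPreconnected hconv.isPreconnected hcover (by positivity)
    (fun i a ha b hb ↦ ?_) hx hy
  have hsq : m * dist a b ^ 2 ≤ 16 * ε :=
    hg.elim (mul_sq_dist_le_of_strongConvexOn_of_affineOn · hfg (hf i) ha hb)
      (mul_sq_dist_le_of_strongConcaveOn_of_affineOn · hfg (hf i) ha hb)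
  rw [← div_le_iff₀' four_pos]
  refine Real.le_sqrt_of_sq_le ?_
  rw [le_div_iff₀ hm]
  linarith

end Approximation

section Hessian

variable {n : ℕ}

/-- The quantity whose infimum along `[x, y]` is `Psi g x y ^ 2`: the least absolute value of an
eigenvalue of `A` if `A` is positive or negative definite, and `0` otherwise. -/
noncomputable def definiteness (A : Matrix (Fin n) (Fin n) ℝ) : ℝ :=
  max 0 (Real.sign (lamMax A * lamMin A) * min |lamMax A| |lamMin A|)

open scoped Matrix

lemma mul_dotProduct_self_le_of_le_spectrum {ι : Type*} [Fintype ι] [DecidableEq ι]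
    {A : Matrix ι ι ℝ} (hA : A.IsHermitian) {c : ℝ} (hc : ∀ μ ∈ spectrum ℝ A, c ≤ μ) (v : ι → ℝ) :
    c * (v ⬝ᵥ v) ≤ v ⬝ᵥ A *ᵥ v := by
  open scoped MatrixOrder in
  have hle : algebraMap ℝ (Matrix ι ι ℝ) c ≤ A := algebraMap_le_of_le_spectrum hc hA
  have h := (Matrix.le_iff.1 hle).dotProduct_mulVec_nonneg v
  simpa [Matrix.sub_mulVec, Algebra.algebraMap_eq_smul_one, Matrix.smul_mulVec] using h

lemma definiteness_of_mul_nonpos {A : Matrix (Fin n) (Fin n) ℝ} (h : lamMax A * lamMin A ≤ 0) :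
    definiteness A = 0 := by
  have hsign : Real.sign (lamMax A * lamMin A) ≤ 0 := by
    rcases h.lt_or_eq with hneg | hzero
    · simp [Real.sign_of_neg hneg]
    · simp [hzero]
  exact max_eq_left (mul_nonpos_of_nonpos_of_nonneg hsign (by positivity))

lemma definiteness_of_mul_pos {A : Matrix (Fin n) (Fin n) ℝ} (h : 0 < lamMax A * lamMin A) :
    definiteness A = min |lamMax A| |lamMin A| := by
  rw [definiteness, Real.sign_of_pos h, one_mul, max_eq_right (by positivity)]

lemma definiteness_mul_dotProduct_self_le {A : Matrix (Fin n) (Fin n) ℝ} (hA : A.IsHermitian)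
    (v : Fin n → ℝ) : definiteness A * (v ⬝ᵥ v) ≤ |v ⬝ᵥ A *ᵥ v| := by
  have hfin : (spectrum ℝ A).Finite := Matrix.finite_real_spectrum
  rcases le_or_gt (lamMax A * lamMin A) 0 with hmul | hmul
  · rw [definiteness_of_mul_nonpos hmul, zero_mul]
    exact abs_nonneg _
  rw [definiteness_of_mul_pos hmul]
  rcases pos_and_pos_or_neg_and_neg_of_mul_pos hmul with ⟨-, hpos⟩ | ⟨hneg, -⟩
  · refine (mul_dotProduct_self_le_of_le_spectrum hA (fun μ hμ ↦ ?_) v).trans (le_abs_self _)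
    calc min |lamMax A| |lamMin A| ≤ |lamMin A| := min_le_right _ _
      _ = lamMin A := abs_of_pos hpos
      _ ≤ μ := csInf_le hfin.bddBelow hμ
  · refine le_trans ?_ (neg_le_abs _)
    rw [← dotProduct_neg, ← Matrix.neg_mulVec]
    refine mul_dotProduct_self_le_of_le_spectrum hA.neg (fun μ hμ ↦ ?_) v
    calc min |lamMax A| |lamMin A| ≤ |lamMax A| := min_le_left _ _
      _ = -lamMax A := abs_of_neg hneg
      _ ≤ μ := neg_le.1 (le_csSup hfin.bddAbove (by rwa [← spectrum.neg_eq] at hμ))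

variable {g : EuclideanSpace ℝ (Fin n) → ℝ} {x y z : EuclideanSpace ℝ (Fin n)}

lemma dotProduct_hess_mulVec (v : EuclideanSpace ℝ (Fin n)) :
    v ⬝ᵥ hess g z *ᵥ v = fderiv ℝ (fderiv ℝ g) z v v := by
  have hv : v = ∑ i, v i • EuclideanSpace.single i (1 : ℝ) := by
    simpa using ((EuclideanSpace.basisFun (Fin n) ℝ).sum_repr v).symm
  conv_rhs => rw [hv]
  simp only [map_sum, map_smul, sum_apply, smul_apply, dotProduct, Matrix.mulVec, hess,
    iteratedFDeriv_two_apply, smul_eq_mul, Finset.mul_sum]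
  rw [Finset.sum_comm]
  refine Finset.sum_congr rfl fun i _ ↦ Finset.sum_congr rfl fun j _ ↦ ?_
  simp only [Matrix.cons_val_zero, Matrix.cons_val_one, Matrix.cons_val_fin_one]
  ring

lemma isHermitian_hess (hg : ContDiffAt ℝ 2 g z) : (hess g z).IsHermitian := by
  refine Matrix.IsHermitian.ext fun i j ↦ ?_
  simp only [hess, iteratedFDeriv_two_apply, star_trivial]
  exact (hg.isSymmSndFDerivAt (by simp)).eq _ _

lemma Psi_sq_le_definiteness (hz : z ∈ segment ℝ x y) :
    Psi g x y ^ 2 ≤ definiteness (hess g z) := by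
  obtain ⟨α, hα, rfl⟩ := (segment_eq_image ℝ x y).subset hz
  have hnonneg : ∀ r ∈ (fun α : ℝ ↦ definiteness (hess g ((1 - α) • x + α • y))) '' Set.Icc 0 1,
      0 ≤ r := Set.forall_mem_image.2 fun _ _ ↦ le_max_left _ _
  calc Psi g x y ^ 2
      = sInf ((fun α : ℝ ↦ definiteness (hess g ((1 - α) • x + α • y))) '' Set.Icc 0 1) :=
        Real.sq_sqrt (Real.sInf_nonneg hnonneg)
    _ ≤ definiteness (hess g ((1 - α) • x + α • y)) :=
        csInf_le ⟨0, hnonneg⟩ (Set.mem_image_of_mem _ hα)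

lemma Psi_sq_mul_le_abs_fderiv_fderiv (hg : ContDiffAt ℝ 2 g z) (hz : z ∈ segment ℝ x y)
    (v : EuclideanSpace ℝ (Fin n)) :
    Psi g x y ^ 2 * ‖v‖ ^ 2 ≤ |fderiv ℝ (fderiv ℝ g) z v v| :=
  calc Psi g x y ^ 2 * ‖v‖ ^ 2 ≤ definiteness (hess g z) * ‖v‖ ^ 2 := by
        gcongr
        exact Psi_sq_le_definiteness hz
    _ = definiteness (hess g z) * (v ⬝ᵥ v) := by
        simp only [EuclideanSpace.real_norm_sq_eq, dotProduct, pow_two (v _)]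
    _ ≤ |fderiv ℝ (fderiv ℝ g) z v v| := by
        rw [← dotProduct_hess_mulVec]
        exact definiteness_mul_dotProduct_self_le (isHermitian_hess hg) v

end Hessian

theorem network_approx_numHidden_bound_general {n : ℕ} {x y : EuclideanSpace ℝ (Fin n)}
    {g : EuclideanSpace ℝ (Fin n) → ℝ} (hg : ∀ z ∈ segment ℝ x y, ContDiffAt ℝ 2 g z)
    {ε : ℝ} (hε : 0 < ε) (N : LayeredNet n) {σ : ℝ → ℝ} {t : ℕ} (hσ : PiecewiseLinear σ t)
    (hf : ∀ z ∈ segment ℝ x y, |N.eval σ z - g z| ≤ ε) :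
    ‖x - y‖ / (4 * √ε) * Psi g x y ≤ (t : ℝ) ^ N.numHidden := by
  obtain rfl | hxy := eq_or_ne x y
  · simp
  obtain hΨ | hΨ : 0 = Psi g x y ∨ 0 < Psi g x y := (Real.sqrt_nonneg _).eq_or_lt
  · rw [← hΨ, mul_zero]
    positivity
  obtain ⟨I, hcover, hI⟩ := hσ.exists_affineOn
  have hregions : segment ℝ x y ⊆ ⋃ s, N.activationRegion σ I s := by
    rw [N.iUnion_activationRegion hcover]
    exact Set.subset_univ _
  have hcurv := strongConvexOn_or_strongConcaveOn_segment hg hxy (pow_pos hΨ 2) fun z hz ↦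
    Psi_sq_mul_le_abs_fderiv_fderiv (hg z hz) hz (y - x)
  have hdist := dist_le_card_mul_of_affineOn
    hregions (LayeredNet.affineOn_eval hI) hcurv (pow_pos hΨ 2) hf
    (left_mem_segment ℝ x y) (right_mem_segment ℝ x y)
  rw [Fintype.card_fun, Fintype.card_fin, N.card_hiddenUnit, Nat.cast_pow, Real.sqrt_div hε.le,
    Real.sqrt_sq hΨ.le, dist_eq_norm, ← mul_div_assoc, ← mul_div_assoc, le_div_iff₀ hΨ] at hdist
  rwa [div_mul_eq_mul_div, div_le_iff₀ (by positivity)]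

/-- Corollary (weak form of Theorem 1): under the same hypotheses,
`t^{|H|} ≥ sup_{(x,y) ∈ R×R} (‖x − y‖₂ / (4√ε)) · Ψ(g, x, y)`. -/
theorem network_approx_numHidden_bound {n : ℕ}
    (R : Set (EuclideanSpace ℝ (Fin n))) (hRc : IsCompact R) (hR : Convex ℝ R)
    (U : Set (EuclideanSpace ℝ (Fin n))) (hU : IsOpen U) (hRU : R ⊆ U)
    (g : EuclideanSpace ℝ (Fin n) → ℝ) (hg : ContDiffOn ℝ 2 g U)
    (ε : ℝ) (hε : 0 < ε)
    (N : LayeredNet n) (hd : 1 ≤ N.depth) (hw : ∀ i < N.depth, 1 ≤ N.width i)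
    (σ : ℝ → ℝ) (t : ℕ) (ht : 1 ≤ t) (hσ : PiecewiseLinear σ t)
    (hf : ∀ z ∈ R, |N.eval σ z - g z| ≤ ε) :
    (t : ℝ) ^ N.numHidden ≥
      sSup ((fun p : EuclideanSpace ℝ (Fin n) × EuclideanSpace ℝ (Fin n) =>
        (‖p.1 - p.2‖ / (4 * Real.sqrt ε)) * Psi g p.1 p.2) '' (R ×ˢ R)) := by
  refine Real.sSup_le ?_ (by positivity)
  rintro _ ⟨⟨x, y⟩, ⟨hx, hy⟩, rfl⟩
  have hxy : segment ℝ x y ⊆ R := hR.segment_subset hx hy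
  exact network_approx_numHidden_bound_general
    (fun z hz ↦ hg.contDiffAt (hU.mem_nhds (hRU (hxy hz)))) hε N hσ fun z hz ↦ hf z (hxy hz)
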